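/- arXiv:1002.2816 — 5 statements merged into one kernel-verified Lean document; each statement's English description precedes it below -/
import Mathlib

section
/- Let F be the 2×2 complex matrix [[1/φ, 1/√φ], [1/√φ, −1/φ]] and R the diagonal matrix diag(e^{4πi/5}, e^{−3πi/5}). Set B₁ = R and B₂ = F·R·F. Then B₁ and B₂ are unitary and satisfy the braid relation B₁·B₂·B₁ = B₂·B₁·B₂; hence σ₁ ↦ B₁, σ₂ ↦ B₂ defines a unitary representation of the braid group on three strands (the braid representation on three Fibonacci anyons of total charge τ). -/
noncomputable section

open Complex

/-- The golden ratio φ = (1+√5)/2. -/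
def φ : ℝ := (1 + Real.sqrt 5) / 2

/-- The Fibonacci F-matrix (as a complex matrix). -/
def Fmat : Matrix (Fin 2) (Fin 2) ℂ :=
  !![(1 / φ : ℝ), (1 / Real.sqrt φ : ℝ); (1 / Real.sqrt φ : ℝ), (-(1 / φ) : ℝ)]

/-- The Fibonacci R-matrix diag(e^{4πi/5}, e^{−3πi/5}). -/
def Rmat : Matrix (Fin 2) (Fin 2) ℂ :=
  !![Complex.exp (4 * Real.pi * Complex.I / 5), 0;
     0, Complex.exp (-(3 * Real.pi * Complex.I) / 5)]

/-- The braid generator B₁ = R. -/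
def B₁ : Matrix (Fin 2) (Fin 2) ℂ := Rmat

/-- The braid generator B₂ = F·R·F. -/
def B₂ : Matrix (Fin 2) (Fin 2) ℂ := Fmat * Rmat * Fmat

/-!
If `σ₂ = f * σ₁ * f` for an involution `f`, the braid relation says that `f` commutes with
`(σ₁ * f) ^ 3`. By Cayley–Hamilton, the cube of a two-by-two matrix is scalar as soon as the square
of its trace equals its determinant. For `σ₁ = R = diag(r₁, r_τ)` and `f = F` the trace is
`(r₁ - r_τ) / φ` and the determinant `-r₁ r_τ`, so everything reduces to
`(r₁ - r_τ) ^ 2 = -φ ^ 2 * r₁ r_τ`: the two R-symbols differ in argument by `7π/5`, and the chord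
joining them has length `2 sin (7π/10) = φ`.
-/

theorem braid_relation_of_commute_mul_pow_three {G : Type*} [Monoid G] {f r : G}
    (hf : f * f = 1) (h : Commute f ((r * f) ^ 3)) :
    r * (f * r * f) * r = f * r * f * r * (f * r * f) :=
  calc
    r * (f * r * f) * r = (r * f) ^ 3 * f := by
      simp only [pow_succ, pow_zero, one_mul, mul_assoc, hf, mul_one]
    _ = f * (r * f) ^ 3 := h.eq.symm
    _ = f * r * f * r * (f * r * f) := by
      simp only [pow_succ, pow_zero, one_mul, mul_assoc]

section TwoByTwo

variable {K : Type*} [CommRing K]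

theorem sq_eq_trace_smul_sub_det_smul_one (M : Matrix (Fin 2) (Fin 2) K) :
    M ^ 2 = M.trace • M - M.det • 1 := by
  nontriviality K
  have cayley_hamilton := M.aeval_self_charpoly
  simp only [Matrix.charpoly_fin_two, map_add, map_sub, map_mul, map_pow, Polynomial.aeval_X,
    Polynomial.aeval_C, Algebra.algebraMap_eq_smul_one, smul_mul_assoc, one_mul]
    at cayley_hamilton
  rw [← sub_eq_zero, ← cayley_hamilton]
  abel

theorem mul_self_eq_one_of_trace_eq_zero_of_det_eq_neg_one
    {M : Matrix (Fin 2) (Fin 2) K} (htrace : M.trace = 0) (hdet : M.det = -1) :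
    M * M = 1 := by
  rw [← sq, sq_eq_trace_smul_sub_det_smul_one, htrace, hdet]
  simp

theorem pow_three_eq_smul_one_of_trace_sq_eq_det
    {M : Matrix (Fin 2) (Fin 2) K} (h : M.trace ^ 2 = M.det) :
    M ^ 3 = (-M.trace ^ 3) • (1 : Matrix (Fin 2) (Fin 2) K) :=
  calc
    M ^ 3 = (M.trace • M - M.det • 1) * M := by
      rw [pow_succ, sq_eq_trace_smul_sub_det_smul_one]
    _ = M.trace • (M.trace • M - M.det • 1) - M.det • M := by
      rw [sub_mul, smul_mul_assoc, smul_mul_assoc, one_mul, ← sq,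
        sq_eq_trace_smul_sub_det_smul_one]
    _ = (-M.trace ^ 3) • (1 : Matrix (Fin 2) (Fin 2) K) := by
      rw [← h]
      module

theorem braid_relation_of_trace_sq_eq_det {F R : Matrix (Fin 2) (Fin 2) K} (hF : F * F = 1)
    (h : (R * F).trace ^ 2 = (R * F).det) :
    R * (F * R * F) * R = F * R * F * R * (F * R * F) := by
  refine braid_relation_of_commute_mul_pow_three hF ?_
  rw [pow_three_eq_smul_one_of_trace_sq_eq_det h]
  exact (Commute.one_right F).smul_right _

end TwoByTwo

theorem diagonal_mem_unitary {n α : Type*} [Fintype n] [DecidableEq n] [Semiring α] [StarRing α]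
    {d : n → α} (hd : ∀ i, d i ∈ unitary α) : Matrix.diagonal d ∈ unitary (Matrix n n α) := by
  simp only [Unitary.mem_iff, Matrix.star_eq_conjTranspose, Matrix.diagonal_conjTranspose,
    Matrix.diagonal_mul_diagonal, Pi.star_apply, Matrix.diagonal_eq_one]
  exact ⟨funext fun i => (hd i).1, funext fun i => (hd i).2⟩

theorem exp_ofReal_mul_I_mem_unitary (x : ℝ) : exp (x * I) ∈ unitary ℂ := by
  rw [Unitary.mem_iff_star_mul_self, star_def, ← normSq_eq_conj_mul_self, normSq_eq_norm_sq,
    norm_exp_ofReal_mul_I, one_pow, ofReal_one]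

theorem exp_mul_I_sub_exp_mul_I (x y : ℂ) :
    exp (x * I) - exp (y * I) = 2 * sin ((x - y) / 2) * I * exp ((x + y) / 2 * I) := by
  have hx : exp (x * I) = exp ((x - y) / 2 * I) * exp ((x + y) / 2 * I) := by
    rw [← exp_add]; ring_nf
  have hy : exp (y * I) = exp (-((x - y) / 2) * I) * exp ((x + y) / 2 * I) := by
    rw [← exp_add]; ring_nf
  rw [two_sin, mul_assoc (_ - _) I I, I_mul_I, hx, hy]
  ring

theorem exp_mul_I_sub_exp_mul_I_sq (x y : ℂ) :
    (exp (x * I) - exp (y * I)) ^ 2 =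
      -(2 * sin ((x - y) / 2)) ^ 2 * (exp (x * I) * exp (y * I)) := by
  have hmul : exp (x * I) * exp (y * I) = exp ((x + y) / 2 * I) ^ 2 := by
    rw [← exp_add, ← exp_nat_mul]
    push_cast
    ring_nf
  rw [exp_mul_I_sub_exp_mul_I, hmul, mul_pow, mul_pow, I_sq]
  ring

theorem φ_pos : 0 < φ := Real.goldenRatio_pos

theorem φ_sq : φ ^ 2 = φ + 1 := Real.goldenRatio_sq

theorem φ_eq_two_mul_sin : φ = 2 * Real.sin (7 * Real.pi / 10) := by
  have hsin : Real.sin (7 * Real.pi / 10) = Real.cos (Real.pi / 5) := by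
    rw [← Real.cos_sub_pi_div_two]
    ring_nf
  rw [hsin, Real.cos_pi_div_five, φ]
  ring

theorem trace_Fmat : Fmat.trace = 0 := by
  rw [Fmat, Matrix.trace_fin_two_of, ofReal_neg, add_neg_cancel]

theorem det_Fmat : Fmat.det = -1 := by
  have hsqrt : (1 / √φ) ^ 2 = 1 / φ := by
    rw [div_pow, Real.sq_sqrt φ_pos.le, one_pow]
  have hφ : (1 / φ) ^ 2 + 1 / φ = 1 := by
    have := φ_pos.ne'
    field_simp
    rw [φ_sq, add_comm]
  have hdet : 1 / φ * -(1 / φ) - 1 / √φ * (1 / √φ) = -1 := by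
    linear_combination -hsqrt - hφ
  rw [Fmat, Matrix.det_fin_two_of]
  exact_mod_cast hdet

theorem Fmat_mul_self : Fmat * Fmat = 1 :=
  mul_self_eq_one_of_trace_eq_zero_of_det_eq_neg_one trace_Fmat det_Fmat

theorem Fmat_isSelfAdjoint : IsSelfAdjoint Fmat := by
  ext i j
  fin_cases i <;> fin_cases j <;> simp [Fmat]

theorem Fmat_mem_unitaryGroup : Fmat ∈ Matrix.unitaryGroup (Fin 2) ℂ := by
  rw [Matrix.mem_unitaryGroup_iff, Fmat_isSelfAdjoint.star_eq, Fmat_mul_self]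

theorem Rmat_eq_diagonal :
    Rmat = Matrix.diagonal
      ![exp ((4 * Real.pi / 5 : ℝ) * I), exp ((-(3 * Real.pi / 5) : ℝ) * I)] := by
  rw [Matrix.diagonal_vec2, Rmat]
  push_cast
  ring_nf

theorem Rmat_mem_unitaryGroup : Rmat ∈ Matrix.unitaryGroup (Fin 2) ℂ := by
  rw [Rmat_eq_diagonal]
  refine diagonal_mem_unitary fun i => ?_
  fin_cases i <;> exact exp_ofReal_mul_I_mem_unitary _

theorem Rmat_apply_sub_apply_sq :
    (Rmat 0 0 - Rmat 1 1) ^ 2 = -(φ : ℂ) ^ 2 * Rmat.det := by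
  have hφ : (φ : ℂ) =
      2 * sin (((4 * Real.pi / 5 : ℝ) - (-(3 * Real.pi / 5) : ℝ)) / 2) := by
    rw [φ_eq_two_mul_sin]
    push_cast
    ring_nf
  rw [Rmat_eq_diagonal, Matrix.det_diagonal, Fin.prod_univ_two, hφ]
  exact exp_mul_I_sub_exp_mul_I_sq _ _

theorem trace_Rmat_mul_Fmat : (Rmat * Fmat).trace = (Rmat 0 0 - Rmat 1 1) / φ := by
  simp only [Rmat, Fmat, Matrix.trace_fin_two, Matrix.mul_fin_two, Matrix.of_apply,
    Matrix.cons_val_zero, Matrix.cons_val_one, ofReal_neg, ofReal_div, ofReal_one]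
  ring

theorem trace_Rmat_mul_Fmat_sq : (Rmat * Fmat).trace ^ 2 = (Rmat * Fmat).det := by
  have hφ : (φ : ℂ) ≠ 0 := ofReal_ne_zero.mpr φ_pos.ne'
  rw [trace_Rmat_mul_Fmat, div_pow, Rmat_apply_sub_apply_sq, Matrix.det_mul, det_Fmat]
  field_simp

/-- B₁ and B₂ are unitary and satisfy the braid relation
B₁·B₂·B₁ = B₂·B₁·B₂, hence σ₁ ↦ B₁, σ₂ ↦ B₂ defines a unitary
representation of the braid group on three strands. -/
theorem fib_braid_representation :
    B₁ ∈ Matrix.unitaryGroup (Fin 2) ℂ ∧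
    B₂ ∈ Matrix.unitaryGroup (Fin 2) ℂ ∧
    B₁ * B₂ * B₁ = B₂ * B₁ * B₂ := by
  refine ⟨Rmat_mem_unitaryGroup, ?_, ?_⟩
  · exact mul_mem (mul_mem Fmat_mem_unitaryGroup Rmat_mem_unitaryGroup) Fmat_mem_unitaryGroup
  · exact braid_relation_of_trace_sq_eq_det Fmat_mul_self trace_Rmat_mul_Fmat_sq

end
end

section
/- Suppose L is a finite type, δ : L → L → L → ℕ is invariant under all permutations of its three arguments, and d : L → ℝ satisfies d i · d j = Σ_k (δ i j k)·(d k) for all i, j. Then for every m ∈ L: Σ_{i,j} (d i)·(d j)·(δ i j m) = D²·(d m), where D² := Σ_i (d i)². -/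
open Finset

/-! For fixed `i`, the quantum-dimension identity says that `d` is an eigenvector of the fusion
matrix `(δ i j k)_{j,k}` with eigenvalue `d i`. This matrix is symmetric, so `d` is also a left
eigenvector with the same eigenvalue; weighting by `d i` and summing over `i` gives the factor
`∑ i, d i ^ 2`. -/

section

open scoped Matrix

theorem vecMul_eq_mulVec_of_isSymm {n R : Type*} [Fintype n] [NonUnitalCommSemiring R]
    {A : Matrix n n R} (hA : A.IsSymm) (v : n → R) : v ᵥ* A = A *ᵥ v := by
  rw [← Matrix.mulVec_transpose, hA.eq]

theorem quantum_dimension_vacuum_sum_general {ι κ R : Type*} [Fintype ι] [Fintype κ]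
    [CommSemiring R] (N : ι → Matrix κ κ R) (c : ι → R) (v : κ → R)
    (hsymm : ∀ i, (N i).IsSymm) (heigen : ∀ i, N i *ᵥ v = c i • v) (m : κ) :
    ∑ i, ∑ j, c i * v j * N i j m = (∑ i, c i ^ 2) * v m := by
  have left_eigen (i : ι) : ∑ j, v j * N i j m = c i * v m :=
    congrFun ((vecMul_eq_mulVec_of_isSymm (hsymm i) v).trans (heigen i)) m
  calc
    ∑ i, ∑ j, c i * v j * N i j m = ∑ i, c i * ∑ j, v j * N i j m := by
      simp only [mul_sum, mul_assoc]
    _ = ∑ i, c i * (c i * v m) := by simp only [left_eigen]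
    _ = (∑ i, c i ^ 2) * v m := by simp only [sum_mul, sq, mul_assoc]

end

/-- If `δ` is a fully symmetric fusion tensor and `d` satisfies the
quantum-dimension identity, then Σ_{i,j} d_i d_j δ(i,j,m) = D² · d_m,
where D² = Σ_i d_i². -/
theorem quantum_dimension_vacuum_sum
    {L : Type*} [Fintype L] (δ : L → L → L → ℕ) (d : L → ℝ)
    (hswap : ∀ i j k, δ i j k = δ j i k)
    (hrot : ∀ i j k, δ i j k = δ i k j)
    (hdim : ∀ i j, d i * d j = ∑ k, (δ i j k : ℝ) * d k) :
    ∀ m : L, ∑ i : L, ∑ j : L, d i * d j * (δ i j m : ℝ) =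
      (∑ i : L, d i ^ 2) * d m :=
  quantum_dimension_vacuum_sum_general (fun i ↦ .of fun j k ↦ (δ i j k : ℝ)) d d
    (fun i ↦ .ext fun j k ↦ congrArg Nat.cast (hrot i k j)) fun i ↦ funext fun j ↦ (hdim i j).symm
end

section
/- Suppose L is a finite type and N : L → L → L → ℕ is commutative and associative. For a full binary tree T with leaves labeled by elements of L, define the fusion count c(T, k) ∈ ℕ recursively by c(leaf a, k) = 1 if a = k and 0 otherwise, and c(node T₁ T₂, k) = Σ_{ℓ₁,ℓ₂} c(T₁, ℓ₁)·c(T₂, ℓ₂)·(N ℓ₁ ℓ₂ k). Then c(T, k) depends only on the multiset of leaf labels of T: if two full binary trees T and T' have equal multisets of leaf labels, then c(T, k) = c(T', k) for every k ∈ L. (Hence the number of fusion-consistent labelings of a pants decomposition with given punctures and total charge is independent of the chosen decomposition.) -/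
open Finset

/-- Full binary trees with leaves labeled by `L`. -/
inductive LabeledTree (L : Type*) where
  | leaf : L → LabeledTree L
  | node : LabeledTree L → LabeledTree L → LabeledTree L

variable {L : Type*}

/-- The fusion count of a labeled full binary tree with total charge `k`. -/
def fusionCount [Fintype L] [DecidableEq L] (N : L → L → L → ℕ) :
    LabeledTree L → L → ℕ
  | .leaf a, k => if a = k then 1 else 0
  | .node t₁ t₂, k =>
      ∑ ℓ₁ : L, ∑ ℓ₂ : L, fusionCount N t₁ ℓ₁ * fusionCount N t₂ ℓ₂ * N ℓ₁ ℓ₂ k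

/-- The multiset of leaf labels of a tree. -/
def leafLabels : LabeledTree L → Multiset L
  | .leaf a => {a}
  | .node t₁ t₂ => leafLabels t₁ + leafLabels t₂

/-!
The fusion count is a homomorphism from labeled trees under grafting to the algebra spanned by `L`
with structure constants `N`. Commutativity and associativity of `N` make this algebra a commutative
semigroup, in which the value of a tree is the product of the values of its leaves. The algebra need
not have a unit, so this product is formed after adjoining one.
-/

theorem LabeledTree.coe_map_eq_prod_leafLabels {S : Type*} [CommSemigroup S] {f : LabeledTree L → S}
    (hf : ∀ t₁ t₂, f (.node t₁ t₂) = f t₁ * f t₂) (t : LabeledTree L) :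
    (f t : WithOne S) = ((leafLabels t).map fun a => (f (.leaf a) : WithOne S)).prod := by
  induction t with
  | leaf a => rw [leafLabels, Multiset.map_singleton, Multiset.prod_singleton]
  | node t₁ t₂ ih₁ ih₂ =>
    rw [hf, WithOne.coe_mul, ih₁, ih₂, leafLabels, Multiset.map_add, Multiset.prod_add]

theorem LabeledTree.map_eq_of_leafLabels_eq {S : Type*} [CommSemigroup S] {f : LabeledTree L → S}
    (hf : ∀ t₁ t₂, f (.node t₁ t₂) = f t₁ * f t₂) {t t' : LabeledTree L}
    (h : leafLabels t = leafLabels t') : f t = f t' :=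
  WithOne.coe_injective <| by
    rw [coe_map_eq_prod_leafLabels hf, coe_map_eq_prod_leafLabels hf, h]

/-- The fusion algebra over `R` with structure constants `N`: a function `x : L → R` stands for the
formal combination `∑ a, x a • a` of labels, and `N a b c` is the coefficient of `c` in `a * b`.
The parameter `N` serves only to select the multiplication, in place of the pointwise one. -/
def FusionAlgebra {R : Type*} (_N : L → L → L → R) : Type _ := L → R

namespace FusionAlgebra

variable [Fintype L] {R : Type*} [NonUnitalCommSemiring R] {N : L → L → L → R}

instance : Mul (FusionAlgebra N) where
  mul x y := fun c => ∑ a, ∑ b, x a * y b * N a b c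

theorem mul_apply (x y : FusionAlgebra N) (c : L) :
    (x * y) c = ∑ a, ∑ b, x a * y b * N a b c :=
  rfl

theorem mul_mul_apply_left (x y z : FusionAlgebra N) (l : L) :
    (x * y * z) l = ∑ i, ∑ j, ∑ k, x i * y j * z k * ∑ m, N i j m * N m k l := by
  simp only [mul_apply, sum_mul, mul_sum]
  rw [sum_comm_cycle]
  refine sum_congr rfl fun i _ => ?_
  rw [sum_comm_cycle]
  refine sum_congr rfl fun j _ => ?_
  rw [sum_comm]
  refine sum_congr rfl fun k _ => sum_congr rfl fun m _ => ?_
  ac_rfl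

theorem mul_mul_apply_right (x y z : FusionAlgebra N) (l : L) :
    (x * (y * z)) l = ∑ i, ∑ j, ∑ k, x i * y j * z k * ∑ m, N j k m * N i m l := by
  simp only [mul_apply, sum_mul, mul_sum]
  refine sum_congr rfl fun i _ => ?_
  rw [← sum_comm_cycle]
  refine sum_congr rfl fun j _ => sum_congr rfl fun k _ =>
    sum_congr rfl fun m _ => ?_
  ac_rfl

protected theorem mul_comm (hcomm : ∀ a b c, N a b c = N b a c) (x y : FusionAlgebra N) :
    x * y = y * x := by
  funext c
  calc (x * y) c = ∑ b, ∑ a, x a * y b * N a b c := sum_comm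
    _ = (y * x) c := by simp only [mul_apply, hcomm, mul_comm]

protected theorem mul_assoc
    (hassoc : ∀ i j k l, ∑ m, N i j m * N m k l = ∑ m, N j k m * N i m l)
    (x y z : FusionAlgebra N) : x * y * z = x * (y * z) := by
  funext l
  simp only [mul_mul_apply_left, mul_mul_apply_right, hassoc]

/-- The multiplicative structure of the fusion algebra of a commutative, associative tensor. It is
not an instance, since `hcomm` and `hassoc` cannot be inferred from `N`. -/
abbrev commSemigroup (hcomm : ∀ a b c, N a b c = N b a c)
    (hassoc : ∀ i j k l, ∑ m, N i j m * N m k l = ∑ m, N j k m * N i m l) :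
    CommSemigroup (FusionAlgebra N) where
  mul_comm := FusionAlgebra.mul_comm hcomm
  mul_assoc := FusionAlgebra.mul_assoc hassoc

/-- The value of a labeled tree in the fusion algebra; its coordinates are the fusion counts. -/
def ofTree [DecidableEq L] (N : L → L → L → ℕ) : LabeledTree L → FusionAlgebra N :=
  fusionCount N

theorem ofTree_node [DecidableEq L] (N : L → L → L → ℕ) (t₁ t₂ : LabeledTree L) :
    ofTree N (.node t₁ t₂) = ofTree N t₁ * ofTree N t₂ := by
  funext k
  rw [mul_apply, ofTree, fusionCount]

end FusionAlgebra

/-- For a commutative, associative fusion-multiplicity tensor, the fusion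
count of a tree depends only on the multiset of its leaf labels: the number
of fusion-consistent labelings of a pants decomposition with given punctures
and total charge is independent of the chosen decomposition. -/
theorem fusionCount_eq_of_leafLabels_eq
    [Fintype L] [DecidableEq L] (N : L → L → L → ℕ)
    (hcomm : ∀ a b c, N a b c = N b a c)
    (hassoc : ∀ i j k l, ∑ m, N i j m * N m k l = ∑ m, N j k m * N i m l)
    (T T' : LabeledTree L) (h : leafLabels T = leafLabels T') :
    ∀ k : L, fusionCount N T k = fusionCount N T' k := by
  let := FusionAlgebra.commSemigroup hcomm hassoc
  exact congrFun (LabeledTree.map_eq_of_leafLabels_eq (FusionAlgebra.ofTree_node N) h)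
end

section
/- The Fibonacci F-symbols satisfy the pentagon identity: for all labels m, ℓ, q, k, p, j, i, s, r ∈ {1, τ}, Σ_n F^{mℓq}_{kpn} · F^{jip}_{mns} · F^{jsn}_{ℓkr} = F^{jip}_{qkr} · F^{riq}_{mℓs}, where the sum runs over n ∈ {1, τ}. -/
noncomputable section

/-- A triple of Fibonacci labels (`false` = 1, `true` = τ) is admissible iff
the number of τ's among them is not exactly one. -/
def admissible (a b c : Bool) : Prop :=
  ((if a then 1 else 0) + (if b then 1 else 0) + (if c then 1 else 0) : ℕ) ≠ 1

instance : ∀ a b c : Bool, Decidable (admissible a b c) := by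
  intro a b c; unfold admissible; infer_instance

/-- The nontrivial 2×2 block of the Fibonacci F-move, indexed by labels. -/
def Mblock (m n : Bool) : ℝ :=
  if m then (if n then -(1 / φ) else 1 / Real.sqrt φ)
  else (if n then 1 / Real.sqrt φ else 1 / φ)

/-- The Fibonacci F-symbol F^{ijm}_{kℓn}. -/
def Fs (i j m k l n : Bool) : ℝ :=
  if admissible i j m ∧ admissible k l m ∧ admissible i l n ∧ admissible j k n then
    (if i = true ∧ j = true ∧ k = true ∧ l = true then Mblock m n else 1)
  else 0

end

/-!
The labels of an F-symbol sit on the six edges of a tetrahedron whose faces are the four triples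
required to be admissible. Dividing `F^{ijm}_{kℓn}` by `√(d_m d_n)` gives a symbol with the full
symmetry of that tetrahedron, and the pentagon becomes the Biedenharn–Elliott identity of the 2–3
move: three tetrahedra around the edge `n`, whose endpoints `a`, `b` are joined to a triangle `cde`,
are exchanged for the two tetrahedra `acde` and `bcde`.

If an edge from `a` or `b` to the triangle carries the vacuum, contracting it makes both sides the
same tetrahedron. Otherwise these six edges all carry `τ`, and for each labelling of the triangle
the identity is a consequence of `φ² = φ + 1`.
-/

lemma admissible_left_comm (a b c : Bool) : admissible a b c ↔ admissible b a c := by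
  revert a b c; decide

lemma admissible_right_comm (a b c : Bool) : admissible a b c ↔ admissible a c b := by
  revert a b c; decide

section FusionTetrahedra

variable {K : Type*} [Field K] (v : K)

/-- The square root of the quantum dimension of a label, where `v` stands for `√d_τ`. -/
def sqrtDim (a : Bool) : K := if a then v else 1

/-- Admissibility of the four faces of the tetrahedron on which `(i, k)`, `(j, l)`, `(m, n)` label
the pairs of opposite edges. -/
abbrev TetAdmissible (i j m k l n : Bool) : Prop :=
  admissible i j m ∧ admissible k l m ∧ admissible i l n ∧ admissible j k n

/-- The value of an admissible tetrahedron in terms of its number of edges labelled `τ`. Since the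
vacuum edges form an equivalence relation on the four vertices, that number is never 1 or 2. -/
def tetWeight : ℕ → K
  | 0 => 1
  | 3 => v⁻¹
  | 4 => v⁻¹ ^ 2
  | 5 => v⁻¹ ^ 2
  | 6 => -v⁻¹ ^ 4
  | _ => 0

/-- The tetrahedrally symmetric 6j-symbol, with upper row `i j m` and lower row `k l n`. -/
def tetSymbol (i j m k l n : Bool) : K :=
  if TetAdmissible i j m k l n then
    tetWeight v (i.toNat + j.toNat + m.toNat + k.toNat + l.toNat + n.toNat)
  else 0

/-- The F-symbol `F^{ijm}_{kln}` in the gauge in which it is a multiple of the symmetric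
6j-symbol. For `v = √φ` it is the Fibonacci F-symbol `Fs`; a root with `v² = -1/φ` gives the
Yang–Lee one. -/
def fSymbol (i j m k l n : Bool) : K :=
  sqrtDim v m * sqrtDim v n * tetSymbol v i j m k l n

lemma tetSymbol_of_not_tetAdmissible {i j m k l n : Bool} (h : ¬ TetAdmissible i j m k l n) :
    tetSymbol v i j m k l n = 0 :=
  if_neg h

lemma tetSymbol_swap_columns (i j m k l n : Bool) :
    tetSymbol v i j m k l n = tetSymbol v i m j k n l := by
  have hadm : TetAdmissible i j m k l n ↔ TetAdmissible i m j k n l := by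
    revert i j m k l n; decide
  simp only [tetSymbol, hadm]
  congr 2
  ring

lemma tetSymbol_rotate_columns (i j m k l n : Bool) :
    tetSymbol v i j m k l n = tetSymbol v m i j n k l := by
  have hadm : TetAdmissible i j m k l n ↔ TetAdmissible m i j n k l := by
    revert i j m k l n; decide
  simp only [tetSymbol, hadm]
  congr 2
  ring

lemma tetSymbol_exchange_rows (i j m k l n : Bool) :
    tetSymbol v i j m k l n = tetSymbol v k l m i j n := by
  have hadm : TetAdmissible i j m k l n ↔ TetAdmissible k l m i j n := by
    revert i j m k l n; decide
  simp only [tetSymbol, hadm]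
  congr 2
  ring

lemma tetSymbol_vacuum (j m k l n : Bool) :
    tetSymbol v false j m k l n =
      if j = m ∧ l = n ∧ admissible k j l then (sqrtDim v j * sqrtDim v l)⁻¹ else 0 := by
  cases j <;> cases m <;> cases k <;> cases l <;> cases n <;>
    simp [tetSymbol, tetWeight, sqrtDim, admissible, sq]

/-- The Biedenharn–Elliott identity on vertices `a, b, c, d, e`: `x₁ x₂ x₃` and `y₁ y₂ y₃` label
the edges from `a` and from `b` to `c, d, e`, the edges `de`, `ec`, `cd` carry `z₁ z₂ z₃`, and the
sum is over the label of `ab`. -/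
def BiedenharnElliott (x₁ x₂ x₃ y₁ y₂ y₃ z₁ z₂ z₃ : Bool) : Prop :=
  ∑ n, sqrtDim v n ^ 2 * (tetSymbol v n x₁ y₁ z₃ y₂ x₂ * tetSymbol v n x₂ y₂ z₁ y₃ x₃ *
      tetSymbol v n x₃ y₃ z₂ y₁ x₁) =
    tetSymbol v z₁ z₂ z₃ x₁ x₂ x₃ * tetSymbol v z₁ z₂ z₃ y₁ y₂ y₃

variable {v}

lemma BiedenharnElliott.rotate {x₁ x₂ x₃ y₁ y₂ y₃ z₁ z₂ z₃ : Bool}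
    (h : BiedenharnElliott v x₁ x₂ x₃ y₁ y₂ y₃ z₁ z₂ z₃) :
    BiedenharnElliott v x₃ x₁ x₂ y₃ y₁ y₂ z₃ z₁ z₂ := by
  unfold BiedenharnElliott at h ⊢
  rw [← tetSymbol_rotate_columns v z₁ z₂ z₃ x₁, ← tetSymbol_rotate_columns v z₁ z₂ z₃ y₁, ← h]
  exact Finset.sum_congr rfl fun n _ ↦ by ring

lemma BiedenharnElliott.swap {x₁ x₂ x₃ y₁ y₂ y₃ z₁ z₂ z₃ : Bool}
    (h : BiedenharnElliott v x₁ x₂ x₃ y₁ y₂ y₃ z₁ z₂ z₃) :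
    BiedenharnElliott v y₁ y₂ y₃ x₁ x₂ x₃ z₁ z₂ z₃ := by
  unfold BiedenharnElliott at h ⊢
  rw [mul_comm, ← h]
  refine Finset.sum_congr rfl fun n _ ↦ ?_
  rw [tetSymbol_swap_columns v n y₁, tetSymbol_swap_columns v n y₂, tetSymbol_swap_columns v n y₃]

lemma sqrtDim_ne_zero (hv : v ≠ 0) (a : Bool) : sqrtDim v a ≠ 0 := by
  cases a <;> simp [sqrtDim, hv]

lemma fSymbol_eq_one_of_vacuum_leg (hv : v ≠ 0) {i j m k l n : Bool}
    (hadm : TetAdmissible i j m k l n) (hlegs : ¬ (i = true ∧ j = true ∧ k = true ∧ l = true)) :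
    fSymbol v i j m k l n = 1 := by
  rw [fSymbol, tetSymbol, if_pos hadm]
  revert hadm hlegs
  cases i <;> cases j <;> cases m <;> cases k <;> cases l <;> cases n <;>
    simp [TetAdmissible, admissible, tetWeight, sqrtDim, hv, ← sq]

lemma biedenharnElliott_vacuum (hv : v ≠ 0) (x₂ x₃ y₁ y₂ y₃ z₁ z₂ z₃ : Bool) :
    BiedenharnElliott v false x₂ x₃ y₁ y₂ y₃ z₁ z₂ z₃ := by
  have habcd (n : Bool) : tetSymbol v n false y₁ z₃ y₂ x₂ =
      if y₁ = n ∧ x₂ = z₃ ∧ admissible y₂ y₁ x₂ then (sqrtDim v y₁ * sqrtDim v x₂)⁻¹ else 0 := by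
    rw [← tetSymbol_rotate_columns, tetSymbol_vacuum]
  have habce (n : Bool) : tetSymbol v n x₃ y₃ z₂ y₁ false =
      if z₂ = x₃ ∧ n = y₁ ∧ admissible y₃ z₂ n then (sqrtDim v z₂ * sqrtDim v n)⁻¹ else 0 := by
    rw [tetSymbol_rotate_columns, tetSymbol_exchange_rows, tetSymbol_vacuum]
  have hacde : tetSymbol v z₁ z₂ z₃ false x₂ x₃ =
      if x₂ = z₃ ∧ z₂ = x₃ ∧ admissible z₁ x₂ z₂ then
        (sqrtDim v x₂ * sqrtDim v z₂)⁻¹ else 0 := by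
    rw [tetSymbol_exchange_rows, tetSymbol_vacuum]
  have hcontract : tetSymbol v y₁ x₂ y₂ z₁ y₃ x₃ = tetSymbol v z₁ x₃ x₂ y₁ y₂ y₃ := by
    rw [tetSymbol_swap_columns, tetSymbol_exchange_rows]
  unfold BiedenharnElliott
  rw [Fintype.sum_eq_single y₁ fun n hne ↦ by simp [habcd, hne.symm], habcd, habce, hacde]
  by_cases hz : x₂ = z₃ ∧ z₂ = x₃
  swap
  · rcases not_and_or.mp hz with h | h <;> simp [h]
  obtain ⟨rfl, rfl⟩ := hz
  rw [hcontract]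
  by_cases hadm : TetAdmissible z₁ z₂ x₂ y₁ y₂ y₃
  swap
  · simp [tetSymbol_of_not_tetAdmissible v hadm]
  obtain ⟨hcde, habc, -, habe⟩ := hadm
  have hcde' : admissible z₁ x₂ z₂ := (admissible_right_comm ..).mp hcde
  have habc' : admissible y₂ y₁ x₂ := (admissible_left_comm ..).mp habc
  have habe' : admissible y₃ z₂ y₁ :=
    (admissible_left_comm ..).mp ((admissible_right_comm ..).mp habe)
  have hdim := sqrtDim_ne_zero hv y₁
  simp only [hcde', habc', habe', and_self, if_true]
  field_simp

lemma tetSymbol_tau_cycle (n z : Bool) :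
    tetSymbol v n true true z true true = if n && z then -v⁻¹ ^ 4 else v⁻¹ ^ 2 := by
  cases n <;> cases z <;> simp [tetSymbol, tetWeight, admissible]

lemma tetSymbol_tau_vertex (z₁ z₂ z₃ : Bool) :
    tetSymbol v z₁ z₂ z₃ true true true =
      if admissible z₁ z₂ z₃ then tetWeight v (z₁.toNat + z₂.toNat + z₃.toNat + 3) else 0 := by
  cases z₁ <;> cases z₂ <;> cases z₃ <;> simp [tetSymbol, tetWeight, admissible]

lemma biedenharnElliott_tau (hv : v ^ 4 = v ^ 2 + 1) (z₁ z₂ z₃ : Bool) :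
    BiedenharnElliott v true true true true true true z₁ z₂ z₃ := by
  have hv₀ : v ≠ 0 := by rintro rfl; simp at hv
  have hdim : v ^ 2 * v⁻¹ ^ 2 = 1 := by field_simp
  have hinv : v⁻¹ ^ 4 + v⁻¹ ^ 2 = 1 := by
    field_simp
    linear_combination -hv
  have no_tau : v ^ 2 * (v⁻¹ ^ 2) ^ 3 + (v⁻¹ ^ 2) ^ 3 = v⁻¹ ^ 2 := by
    linear_combination v⁻¹ ^ 4 * hdim + v⁻¹ ^ 2 * hinv
  have one_tau : v ^ 2 * ((v⁻¹ ^ 2) ^ 2 * -v⁻¹ ^ 4) + (v⁻¹ ^ 2) ^ 3 = 0 := by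
    linear_combination -v⁻¹ ^ 6 * hdim
  have two_tau : v ^ 2 * (v⁻¹ ^ 2 * (-v⁻¹ ^ 4) ^ 2) + (v⁻¹ ^ 2) ^ 3 = (v⁻¹ ^ 2) ^ 2 := by
    linear_combination v⁻¹ ^ 8 * hdim + v⁻¹ ^ 4 * hinv
  have three_tau : v ^ 2 * (-v⁻¹ ^ 4) ^ 3 + (v⁻¹ ^ 2) ^ 3 = (-v⁻¹ ^ 4) ^ 2 := by
    linear_combination -v⁻¹ ^ 10 * hdim - v⁻¹ ^ 6 * hinv
  unfold BiedenharnElliott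
  simp only [tetSymbol_tau_cycle, tetSymbol_tau_vertex, Fintype.sum_bool]
  cases z₁ <;> cases z₂ <;> cases z₃ <;>
    simp only [sqrtDim, admissible, tetWeight, ↓reduceIte, Bool.and_false, Bool.and_true,
      Bool.false_eq_true, Bool.toNat_false, Bool.toNat_true, zero_add, add_zero, Nat.reduceAdd,
      ne_eq, zero_ne_one, OfNat.ofNat_ne_one, not_true_eq_false, not_false_eq_true]
  · linear_combination no_tau
  · linear_combination one_tau
  · linear_combination one_tau
  · linear_combination two_tau
  · linear_combination one_tau
  · linear_combination two_tau
  · linear_combination two_tau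
  · linear_combination three_tau

theorem biedenharnElliott (hv : v ^ 4 = v ^ 2 + 1) (x₁ x₂ x₃ y₁ y₂ y₃ z₁ z₂ z₃ : Bool) :
    BiedenharnElliott v x₁ x₂ x₃ y₁ y₂ y₃ z₁ z₂ z₃ := by
  have hv₀ : v ≠ 0 := by rintro rfl; simp at hv
  have vacuum := biedenharnElliott_vacuum hv₀
  cases x₁
  · exact vacuum ..
  cases x₂
  · exact (vacuum ..).rotate
  cases x₃
  · exact (vacuum ..).rotate.rotate
  cases y₁
  · exact (vacuum ..).swap
  cases y₂
  · exact (vacuum ..).swap.rotate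
  cases y₃
  · exact (vacuum ..).swap.rotate.rotate
  exact biedenharnElliott_tau hv z₁ z₂ z₃

theorem fib_pentagon_general (hv : v ^ 4 = v ^ 2 + 1) (m l q k p j i s r : Bool) :
    ∑ n, fSymbol v m l q k p n * fSymbol v j i p m n s * fSymbol v j s n l k r =
      fSymbol v j i p q k r * fSymbol v r i q m l s := by
  have hBE : BiedenharnElliott v m l s p k j r i q := biedenharnElliott hv ..
  have habcd (n : Bool) : tetSymbol v m l q k p n = tetSymbol v n m p q k l := by
    rw [← tetSymbol_rotate_columns, tetSymbol_exchange_rows, ← tetSymbol_rotate_columns]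
  have habce (n : Bool) : tetSymbol v j i p m n s = tetSymbol v n s j i p m := by
    rw [← tetSymbol_rotate_columns, tetSymbol_exchange_rows]
  have habde (n : Bool) : tetSymbol v j s n l k r = tetSymbol v n l k r j s := by
    rw [tetSymbol_exchange_rows, tetSymbol_rotate_columns]
  have hbcde : tetSymbol v j i p q k r = tetSymbol v r i q p k j := by
    rw [tetSymbol_rotate_columns, tetSymbol_exchange_rows, tetSymbol_swap_columns]
  calc
    _ = sqrtDim v p * sqrtDim v q * sqrtDim v r * sqrtDim v s *
        ∑ n, sqrtDim v n ^ 2 * (tetSymbol v n m p q k l * tetSymbol v n l k r j s *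
          tetSymbol v n s j i p m) := by
      rw [Finset.mul_sum]
      refine Finset.sum_congr rfl fun n _ ↦ ?_
      simp only [fSymbol, habcd, habce, habde]
      ring
    _ = sqrtDim v p * sqrtDim v q * sqrtDim v r * sqrtDim v s *
        (tetSymbol v r i q m l s * tetSymbol v r i q p k j) := by rw [hBE]
    _ = _ := by
      simp only [fSymbol, hbcde]
      ring

end FusionTetrahedra

lemma sq_sqrt_φ : √φ ^ 2 = φ := Real.sq_sqrt Real.goldenRatio_pos.le

lemma sqrt_φ_ne_zero : √φ ≠ 0 := (Real.sqrt_pos.mpr Real.goldenRatio_pos).ne'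

lemma sqrt_φ_pow_four : √φ ^ 4 = √φ ^ 2 + 1 := by
  calc √φ ^ 4 = (√φ ^ 2) ^ 2 := by ring
    _ = φ ^ 2 := by rw [sq_sqrt_φ]
    _ = φ + 1 := Real.goldenRatio_sq
    _ = √φ ^ 2 + 1 := by rw [sq_sqrt_φ]

lemma Mblock_eq_fSymbol (m n : Bool) : Mblock m n = fSymbol √φ true true m true true n := by
  have hinv : φ⁻¹ = (√φ)⁻¹ ^ 2 := by rw [inv_pow, sq_sqrt_φ]
  rw [fSymbol, tetSymbol_rotate_columns, tetSymbol_tau_cycle]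
  cases m <;> cases n <;>
    simp only [Mblock, sqrtDim, ↓reduceIte, Bool.false_eq_true, Bool.and_false, Bool.and_true,
      one_div, hinv] <;>
    field_simp

lemma Fs_eq_fSymbol (i j m k l n : Bool) : Fs i j m k l n = fSymbol √φ i j m k l n := by
  unfold Fs
  split_ifs with hadm hlegs
  · obtain ⟨rfl, rfl, rfl, rfl⟩ := hlegs
    exact Mblock_eq_fSymbol m n
  · exact (fSymbol_eq_one_of_vacuum_leg sqrt_φ_ne_zero hadm hlegs).symm
  · rw [fSymbol, tetSymbol_of_not_tetAdmissible _ hadm, mul_zero]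

/-- The Fibonacci F-symbols satisfy the pentagon identity. -/
theorem fib_pentagon (m l q k p j i s r : Bool) :
    ∑ n : Bool, Fs m l q k p n * Fs j i p m n s * Fs j s n l k r =
      Fs j i p q k r * Fs r i q m l s := by
  simp only [Fs_eq_fSymbol]
  exact fib_pentagon_general sqrt_φ_pow_four m l q k p j i s r
end

section
/- The Fibonacci F-symbols are unitary in the following sense: for all labels i, j, k, ℓ, m, m' ∈ {1, τ}, Σ_n F^{ijm}_{kℓn} · F^{ijm'}_{kℓn} = [m = m'] · [(i,j,m) admissible] · [(k,ℓ,m) admissible], where [·] is 1 if the bracketed condition holds and 0 otherwise, and the sum runs over n ∈ {1, τ}. -/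
/-!
If all four outer labels are `τ`, both inner labels are free and the F-matrix is the real symmetric
matrix `M`, whose rows are orthonormal because `φ⁻² + φ⁻¹ = 1`. If one outer label is the vacuum, it
forces the inner label on either side of the F-move, and associativity of fusion makes the two sides
nonzero together, so the F-matrix has at most one nonzero entry, equal to `1`.
-/

theorem one_div_phi_sq_add_one_div_phi : (1 / φ) ^ 2 + 1 / φ = 1 := by
  have phi_ne_zero : φ ≠ 0 := Real.goldenRatio_ne_zero
  have phi_sq : φ ^ 2 = φ + 1 := Real.goldenRatio_sq
  field_simp
  linarith

theorem one_div_sqrt_phi_sq : (1 / √φ) ^ 2 = 1 / φ := by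
  rw [div_pow, one_pow, Real.sq_sqrt (show 0 ≤ φ from Real.goldenRatio_pos.le)]

theorem sum_Mblock_mul_Mblock (m m' : Bool) :
    ∑ n : Bool, Mblock m n * Mblock m' n = if m = m' then 1 else 0 := by
  have row_norm : (1 / φ) ^ 2 + (1 / √φ) ^ 2 = 1 := by
    rw [one_div_sqrt_phi_sq, one_div_phi_sq_add_one_div_phi]
  cases m <;> cases m' <;>
    simp only [Fintype.sum_bool, Mblock, reduceCtorEq, if_true, if_false, Bool.false_eq_true] <;>
    linarith

theorem admissible_true_true (m : Bool) : admissible true true m := by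
  decide +revert

/-- `m` is an intermediate label allowed when `i, j` and `k, ℓ` are fused in pairs. An F-symbol
`F^{ijm}_{kℓn}` passes from the pairing `(i, j), (k, ℓ)` with channel `m` to the pairing
`(i, ℓ), (j, k)` with channel `n`. -/
def IsFusionChannel (i j k l m : Bool) : Prop :=
  admissible i j m ∧ admissible k l m

instance (i j k l m : Bool) : Decidable (IsFusionChannel i j k l m) :=
  inferInstanceAs (Decidable (_ ∧ _))

namespace IsFusionChannel

variable {i j k l m m' : Bool}

theorem eq_of_not_all_true (houter : ¬(i = true ∧ j = true ∧ k = true ∧ l = true))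
    (hm : IsFusionChannel i j k l m) (hm' : IsFusionChannel i j k l m') : m = m' := by
  decide +revert

theorem exists_crossed (hm : IsFusionChannel i j k l m) : ∃ n, IsFusionChannel i l j k n := by
  decide +revert

theorem existsUnique_crossed (houter : ¬(i = true ∧ j = true ∧ k = true ∧ l = true))
    (hm : IsFusionChannel i j k l m) : ∃! n, IsFusionChannel i l j k n :=
  existsUnique_of_exists_of_unique hm.exists_crossed fun _ _ =>
    eq_of_not_all_true fun ⟨hi, hl, hj, hk⟩ => houter ⟨hi, hj, hk, hl⟩

end IsFusionChannel

theorem Fs_true (m n : Bool) : Fs true true m true true n = Mblock m n := by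
  simp only [Fs, admissible_true_true, and_self, if_true]

theorem Fs_of_not_all_true {i j k l : Bool}
    (houter : ¬(i = true ∧ j = true ∧ k = true ∧ l = true)) (m n : Bool) :
    Fs i j m k l n =
      if IsFusionChannel i j k l m ∧ IsFusionChannel i l j k n then 1 else 0 := by
  simp only [Fs, if_neg houter, IsFusionChannel, and_assoc]

theorem sum_Fs_mul_Fs_of_not_all_true {i j k l : Bool}
    (houter : ¬(i = true ∧ j = true ∧ k = true ∧ l = true)) (m m' : Bool) :
    ∑ n : Bool, Fs i j m k l n * Fs i j m' k l n =
      if m = m' ∧ IsFusionChannel i j k l m then 1 else 0 := by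
  simp only [Fs_of_not_all_true houter]
  by_cases hm : IsFusionChannel i j k l m
  · obtain ⟨n₀, hn₀, n₀_unique⟩ := hm.existsUnique_crossed houter
    have crossed_iff : ∀ n, IsFusionChannel i l j k n ↔ n = n₀ :=
      fun n => ⟨n₀_unique n, fun h => h ▸ hn₀⟩
    have channel_iff : IsFusionChannel i j k l m' ↔ m = m' :=
      ⟨hm.eq_of_not_all_true houter, fun h => h ▸ hm⟩
    by_cases heq : m = m' <;>
      simp [hm, crossed_iff, channel_iff, heq, -Fintype.univ_bool]
  · simp only [hm, false_and, and_false, if_false, zero_mul, Finset.sum_const_zero]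

/-- The Fibonacci F-symbols are unitary:
Σ_n F^{ijm}_{kℓn} F^{ijm'}_{kℓn} = [m = m'] · [(i,j,m) admissible] · [(k,ℓ,m) admissible]. -/
theorem fib_F_unitary (i j k l m m' : Bool) :
    ∑ n : Bool, Fs i j m k l n * Fs i j m' k l n =
      if m = m' ∧ admissible i j m ∧ admissible k l m then 1 else 0 := by
  by_cases houter : i = true ∧ j = true ∧ k = true ∧ l = true
  · obtain ⟨rfl, rfl, rfl, rfl⟩ := houter
    simp only [Fs_true, sum_Mblock_mul_Mblock, admissible_true_true, and_true]
  · exact sum_Fs_mul_Fs_of_not_all_true houter m m'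
end
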